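/- Let (E,𝒞,r) be a semimatroid. Then T(𝒞; t, s) = Σ_{X ∈ ℒ(𝒞)} T(𝒞|X; 0, s) · T(𝒞/X; t, 0), where the sum is over all flats X of 𝒞; moreover T(𝒞; t, s) = Σ_X T(𝒞|X; 0, s) · T(𝒞/X; t, 0), where this second sum ranges only over the cyclic flats X of 𝒞 (flats X such that the restriction 𝒞|X has no bridges). -/

import Mathlib

open scoped Classical

/-- A semimatroid on a finite ground set `E`: a nonempty, subset-closed collection `C`
of "central" subsets of `E`, together with a rank function `r` satisfying (SR1)-(SR5). -/
structure Semimatroid (E : Type*) [DecidableEq E] [Fintype E] where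
  C : Finset (Finset E)
  r : Finset E → ℕ
  C_nonempty : C.Nonempty
  mem_of_subset : ∀ ⦃X Y : Finset E⦄, X ∈ C → Y ⊆ X → Y ∈ C
  r_le_card : ∀ ⦃X : Finset E⦄, X ∈ C → r X ≤ X.card
  r_mono : ∀ ⦃X Y : Finset E⦄, X ∈ C → Y ∈ C → X ⊆ Y → r X ≤ r Y
  submodular : ∀ ⦃X Y : Finset E⦄, X ∈ C → Y ∈ C → X ∪ Y ∈ C →
    r (X ∩ Y) + r (X ∪ Y) ≤ r X + r Y
  union_mem : ∀ ⦃X Y : Finset E⦄, X ∈ C → Y ∈ C → r X = r (X ∩ Y) → X ∪ Y ∈ C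
  augment : ∀ ⦃X Y : Finset E⦄, X ∈ C → Y ∈ C → r X < r Y →
    ∃ e ∈ Y \ X, insert e X ∈ C

namespace Semimatroid

variable {E : Type*} [DecidableEq E] [Fintype E] (S : Semimatroid E)

/-- The rank `r(𝒞)` of the semimatroid: the common rank of the maximal central sets. -/
def rank : ℕ := S.C.sup S.r

/-- The closure of a central set `X`:
`cl X = {e ∈ E : X ∪ {e} ∈ 𝒞 and r (X ∪ {e}) = r X}`. -/
def cl (X : Finset E) : Finset E :=
  Finset.univ.filter fun e => insert e X ∈ S.C ∧ S.r (insert e X) = S.r X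

/-- The flats of the semimatroid: central sets `X` with `cl X = X`. -/
def flats : Finset (Finset E) := S.C.filter fun X => S.cl X = X

/-- The characteristic polynomial `χ(𝒞;t) = Σ_{X ∈ 𝒞} (−1)^{|X|} t^{r(𝒞)−r(X)}`. -/
noncomputable def charPoly : Polynomial ℤ :=
  ∑ A ∈ S.C, (-1 : Polynomial ℤ) ^ A.card * Polynomial.X ^ (S.rank - S.r A)

end Semimatroid

namespace Semimatroid

variable {E : Type*} [DecidableEq E] [Fintype E] (S : Semimatroid E)

/-- The Tutte polynomial of `𝒞` evaluated at `(t,s)`: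
`T(𝒞;t,s) = Σ_{A ∈ 𝒞} (t−1)^{r(𝒞)−r(A)} (s−1)^{|A|−r(A)}`. -/
def tutteEval (t s : ℤ) : ℤ :=
  ∑ A ∈ S.C, (t - 1) ^ (S.rank - S.r A) * (s - 1) ^ (A.card - S.r A)

/-- The central sets of the restriction `𝒞|X`: `{Y ⊆ X : Y ∈ 𝒞}`. -/
def restCentrals (X : Finset E) : Finset (Finset E) := S.C.filter fun Y => Y ⊆ X

/-- The rank of the restriction `𝒞|X`. -/
def restRank (X : Finset E) : ℕ := (S.restCentrals X).sup S.r

/-- The Tutte polynomial of the restriction `𝒞|X`, evaluated at `(t,s)`. -/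
def restTutteEval (X : Finset E) (t s : ℤ) : ℤ :=
  ∑ Y ∈ S.restCentrals X,
    (t - 1) ^ (S.restRank X - S.r Y) * (s - 1) ^ (Y.card - S.r Y)

/-- The central sets of the contraction `𝒞/X`: `{Y ⊆ E \ X : Y ∪ X ∈ 𝒞}`. -/
def contrCentrals (X : Finset E) : Finset (Finset E) :=
  (Finset.univ \ X).powerset.filter fun Y => Y ∪ X ∈ S.C

/-- The rank of the contraction `𝒞/X`, whose rank function is `Y ↦ r(Y ∪ X) − r(X)`. -/
def contrRank (X : Finset E) : ℕ :=
  (S.contrCentrals X).sup fun Y => S.r (Y ∪ X) - S.r X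

/-- The Tutte polynomial of the contraction `𝒞/X`, evaluated at `(t,s)`. -/
def contrTutteEval (X : Finset E) (t s : ℤ) : ℤ :=
  ∑ Y ∈ S.contrCentrals X,
    (t - 1) ^ (S.contrRank X - (S.r (Y ∪ X) - S.r X)) *
      (s - 1) ^ (Y.card - (S.r (Y ∪ X) - S.r X))

/-- `B` is a basis of the restriction `𝒞|X`: a maximal independent central subset of `X`. -/
def RestBasis (X B : Finset E) : Prop :=
  B ∈ S.C ∧ B ⊆ X ∧ S.r B = B.card ∧
    ∀ B' : Finset E, B' ∈ S.C → B' ⊆ X → S.r B' = B'.card → B ⊆ B' → B' = B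

/-- An element `e ∈ X` is a bridge of the restriction `𝒞|X` if it lies in every basis. -/
def RestBridge (X : Finset E) (e : E) : Prop :=
  e ∈ X ∧ ∀ B : Finset E, S.RestBasis X B → e ∈ B

/-- The cyclic flats of `𝒞`: flats `X` such that `𝒞|X` has no bridges. -/
noncomputable def cyclicFlats : Finset (Finset E) :=
  S.flats.filter fun X => ¬ ∃ e : E, S.RestBridge X e

end Semimatroid

/-!
In the product `T(𝒞|X; 0, s) * T(𝒞/X; t, 0)`, the term indexed by `Y ⊆ X` on the left and `Z ⊇ X` on
the right depends on `X` only through the sign `(-1) ^ |X|`. The alternating sum of these signs over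
`Y ⊆ X ⊆ Z` is zero unless `Y = Z`, so summing over all central `X` leaves exactly the terms of
`T(𝒞; t, s)`. With two further parameters the same cancellation gives Kung's identity. The central
sets which are not cyclic flats contribute zero: an element of `cl X \ X` is a loop of `𝒞/X` and
makes `T(𝒞/X; t, 0)` vanish, while a bridge of `𝒞|X` makes `T(𝒞|X; 0, s)` vanish.
-/

section PowersetSums

lemma sum_powerset_eq_zero_of_add_insert_eq_zero {α M : Type*} [DecidableEq α] [AddCommMonoid M]
    {s : Finset α} {e : α} (he : e ∈ s) {f : Finset α → M}
    (hf : ∀ Y ⊆ s, e ∉ Y → f Y + f (insert e Y) = 0) : ∑ Y ∈ s.powerset, f Y = 0 := by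
  rw [← Finset.insert_erase he, Finset.sum_powerset_insert (Finset.notMem_erase e s),
    ← Finset.sum_add_distrib]
  refine Finset.sum_eq_zero fun Y hY => ?_
  obtain ⟨hYs, heY⟩ := Finset.subset_erase.1 (Finset.mem_powerset.1 hY)
  exact hf Y hYs heY

lemma sum_powerset_neg_one_pow_card_mul_sum_powerset {α R : Type*} [Ring R]
    (Z : Finset α) (f : Finset α → R) :
    ∑ X ∈ Z.powerset, (-1) ^ X.card * ∑ Y ∈ X.powerset, f Y = (-1) ^ Z.card * f Z := by
  classical
  induction Z using Finset.induction_on generalizing f with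
  | empty => simp
  | insert e Z he ih =>
    rw [Finset.sum_powerset_insert he, ← Finset.sum_add_distrib, Finset.card_insert_of_notMem he]
    have cancel : ∀ X ∈ Z.powerset,
        (-1) ^ X.card * ∑ Y ∈ X.powerset, f Y +
          (-1) ^ (insert e X).card * ∑ Y ∈ (insert e X).powerset, f Y =
        (-1) ^ X.card * ∑ Y ∈ X.powerset, -f (insert e Y) := by
      intro X hX
      have heX : e ∉ X := fun h => he (Finset.mem_powerset.1 hX h)
      rw [Finset.sum_powerset_insert heX, Finset.card_insert_of_notMem heX, Finset.sum_neg_distrib]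
      noncomm_ring
    rw [Finset.sum_congr rfl cancel, ih fun Y => -f (insert e Y)]
    noncomm_ring

end PowersetSums

namespace Semimatroid

variable {E : Type*} [DecidableEq E] [Fintype E] (S : Semimatroid E) {X Y : Finset E} {e : E}

section RankAndClosure

lemma r_le_rank (hX : X ∈ S.C) : S.r X ≤ S.rank := Finset.le_sup hX

lemma r_le_r_add_card_sdiff (hY : Y ∈ S.C) (hXY : X ⊆ Y) : S.r Y ≤ S.r X + (Y \ X).card := by
  have hX := S.mem_of_subset hY hXY
  have hD : Y \ X ∈ S.C := S.mem_of_subset hY Finset.sdiff_subset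
  have hunion : X ∪ Y \ X = Y := Finset.union_sdiff_of_subset hXY
  have hsub := S.submodular hX hD (hunion.symm ▸ hY)
  have hcard := S.r_le_card hD
  rw [hunion] at hsub
  omega

lemma r_insert_le (hX : insert e X ∈ S.C) : S.r (insert e X) ≤ S.r X + 1 := by
  have hcard : (insert e X \ X).card ≤ 1 :=
    (Finset.card_le_card (t := {e}) (by grind)).trans (Finset.card_singleton e).le
  have := S.r_le_r_add_card_sdiff hX (Finset.subset_insert e X)
  omega

lemma r_insert_add_r_le (hY : insert e Y ∈ S.C) (hXY : X ⊆ Y) :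
    S.r (insert e Y) + S.r X ≤ S.r Y + S.r (insert e X) := by
  have hY' := S.mem_of_subset hY (Finset.subset_insert e Y)
  have hX := S.mem_of_subset hY (Finset.insert_subset_insert e hXY)
  have hunion : Y ∪ insert e X = insert e Y := by
    rw [Finset.union_insert, Finset.union_eq_left.2 hXY]
  have hsub := S.submodular hY' hX (hunion ▸ hY)
  have hinter := S.r_mono (S.mem_of_subset hY' hXY)
    (S.mem_of_subset hY' Finset.inter_subset_left)
    (Finset.subset_inter hXY (Finset.subset_insert e X))
  rw [hunion] at hsub
  omega

lemma exists_superset_r_eq_rank (hX : X ∈ S.C) : ∃ Z ∈ S.C, X ⊆ Z ∧ S.r Z = S.rank := by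
  obtain ⟨Z, hXZ, hZ⟩ := S.C.exists_le_maximal hX
  refine ⟨Z, hZ.prop, hXZ, (S.r_le_rank hZ.prop).antisymm (Finset.sup_le fun Y hY => ?_)⟩
  by_contra! hlt
  obtain ⟨e, he, hins⟩ := S.augment hZ.prop hY hlt
  exact (Finset.mem_sdiff.1 he).2
    (hZ.le_of_ge hins (Finset.subset_insert e Z) (Finset.mem_insert_self e Z))

lemma exists_subset_r_eq_card (hX : X ∈ S.C) : ∃ B ⊆ X, S.r B = B.card ∧ S.r B = S.r X := by
  induction X using Finset.induction_on with
  | empty => exact ⟨∅, subset_rfl, by simpa using S.r_le_card hX, rfl⟩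
  | insert e X he ih =>
    have hX' := S.mem_of_subset hX (Finset.subset_insert e X)
    obtain ⟨B, hBX, hind, hspan⟩ := ih hX'
    by_cases hr : S.r (insert e X) = S.r X
    · exact ⟨B, hBX.trans (Finset.subset_insert e X), hind, hspan.trans hr.symm⟩
    · have hins : insert e B ⊆ insert e X := Finset.insert_subset_insert e hBX
      have hcard : (insert e B).card = B.card + 1 :=
        Finset.card_insert_of_notMem fun h => he (hBX h)
      have hmono := S.r_mono hX' hX (Finset.subset_insert e X)
      have hX_le := S.r_insert_le hX
      have hB_le := S.r_insert_le (S.mem_of_subset hX hins)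
      have hdim := S.r_insert_add_r_le hX hBX
      exact ⟨insert e B, hins, by omega, by omega⟩

lemma mem_cl : e ∈ S.cl X ↔ insert e X ∈ S.C ∧ S.r (insert e X) = S.r X := by
  simp [cl]

lemma subset_cl (hX : X ∈ S.C) : X ⊆ S.cl X := fun e he => by
  simp [mem_cl, Finset.insert_eq_of_mem he, hX]

lemma cl_mono (hY : Y ∈ S.C) (hXY : X ⊆ Y) : S.cl X ⊆ S.cl Y := by
  intro e he
  obtain ⟨heX, hr⟩ := S.mem_cl.1 he
  have hI : insert e X ∩ Y ∈ S.C := S.mem_of_subset hY Finset.inter_subset_right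
  have hXI := S.r_mono (S.mem_of_subset hY hXY) hI
    (Finset.subset_inter (Finset.subset_insert e X) hXY)
  have hIX := S.r_mono hI heX Finset.inter_subset_left
  have heY : insert e Y ∈ S.C := by
    have hunion := S.union_mem heX hY (by omega)
    rwa [Finset.insert_union, Finset.union_eq_right.2 hXY] at hunion
  have hle := S.r_insert_add_r_le heY hXY
  have hge := S.r_mono hY heY (Finset.subset_insert e Y)
  exact S.mem_cl.2 ⟨heY, by omega⟩

end RankAndClosure

section Nullity

/-- The nullity `|X| - r(X)` of a central set `X`, the exponent of `s - 1` in the Tutte polynomial.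
The truncated subtraction makes it `0` where a non-central `X` has `r X > |X|`. -/
def nullity (X : Finset E) : ℕ := X.card - S.r X

lemma nullity_add_r (hX : X ∈ S.C) : S.nullity X + S.r X = X.card :=
  Nat.sub_add_cancel (S.r_le_card hX)

lemma nullity_mono (hY : Y ∈ S.C) (hXY : X ⊆ Y) : S.nullity X ≤ S.nullity Y := by
  have hr := S.r_le_r_add_card_sdiff hY hXY
  have hcard := Finset.card_sdiff_add_card_eq_card hXY
  unfold nullity
  omega

end Nullity

section RestrictionAndContraction

lemma restCentrals_eq_powerset (hX : X ∈ S.C) : S.restCentrals X = X.powerset := by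
  ext Y
  simpa [restCentrals] using S.mem_of_subset hX

lemma restRank_eq_r (hX : X ∈ S.C) : S.restRank X = S.r X := by
  rw [restRank, S.restCentrals_eq_powerset hX]
  refine (Finset.sup_le fun Y hY => ?_).antisymm (Finset.le_sup (Finset.mem_powerset_self X))
  have hYX := Finset.mem_powerset.1 hY
  exact S.r_mono (S.mem_of_subset hX hYX) hX hYX

lemma restTutteEval_eq_sum_powerset (hX : X ∈ S.C) (t s : ℤ) :
    S.restTutteEval X t s =
      ∑ Y ∈ X.powerset, (t - 1) ^ (S.r X - S.r Y) * (s - 1) ^ S.nullity Y := by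
  rw [restTutteEval, S.restCentrals_eq_powerset hX, S.restRank_eq_r hX]
  rfl

lemma mem_contrCentrals : Y ∈ S.contrCentrals X ↔ Disjoint Y X ∧ Y ∪ X ∈ S.C := by
  simp [contrCentrals, Finset.subset_sdiff]

lemma contrRank_eq_rank_sub_r (hX : X ∈ S.C) : S.contrRank X = S.rank - S.r X := by
  refine (Finset.sup_le fun Y hY => ?_).antisymm ?_
  · exact Nat.sub_le_sub_right (S.r_le_rank (S.mem_contrCentrals.1 hY).2) _
  · obtain ⟨Z, hZ, hXZ, hr⟩ := S.exists_superset_r_eq_rank hX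
    have hunion : Z \ X ∪ X = Z := Finset.sdiff_union_of_subset hXZ
    have hmem : Z \ X ∈ S.contrCentrals X :=
      S.mem_contrCentrals.2 ⟨Finset.sdiff_disjoint, hunion.symm ▸ hZ⟩
    simpa [hunion, hr] using Finset.le_sup (f := fun Y => S.r (Y ∪ X) - S.r X) hmem

lemma contrTutteEval_eq_sum_superset (hX : X ∈ S.C) (t s : ℤ) :
    S.contrTutteEval X t s = ∑ Z ∈ S.C with X ⊆ Z,
      (t - 1) ^ (S.rank - S.r Z) * (s - 1) ^ (S.nullity Z - S.nullity X) := by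
  rw [contrTutteEval, S.contrRank_eq_rank_sub_r hX]
  refine Finset.sum_bij' (fun Y _ => Y ∪ X) (fun Z _ => Z \ X) ?_ ?_ ?_ ?_ ?_
  · intro Y hY
    exact Finset.mem_filter.2 ⟨(S.mem_contrCentrals.1 hY).2, Finset.subset_union_right⟩
  · intro Z hZ
    obtain ⟨hZ, hXZ⟩ := Finset.mem_filter.1 hZ
    rw [mem_contrCentrals, Finset.sdiff_union_of_subset hXZ]
    exact ⟨Finset.sdiff_disjoint, hZ⟩
  · intro Y hY
    exact Finset.union_sdiff_cancel_right (S.mem_contrCentrals.1 hY).1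
  · intro Z hZ
    exact Finset.sdiff_union_of_subset (Finset.mem_filter.1 hZ).2
  · intro Y hY
    obtain ⟨hdisj, hYX⟩ := S.mem_contrCentrals.1 hY
    have hr := S.r_mono hX hYX Finset.subset_union_right
    have hnX := S.nullity_add_r hX
    have hnYX := S.nullity_add_r hYX
    rw [Finset.card_union_of_disjoint hdisj] at hnYX
    congr 2 <;> omega

end RestrictionAndContraction

section Convolution

lemma pow_mul_restTutteEval_one_sub (hX : X ∈ S.C) (a c : ℤ) :
    a ^ (S.rank - S.r X) * (-1) ^ S.nullity X * S.restTutteEval X (1 - a) (1 - c) =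
      (-1) ^ X.card *
        ∑ Y ∈ X.powerset, (-1) ^ S.r Y * a ^ (S.rank - S.r Y) * (-c) ^ S.nullity Y := by
  rw [S.restTutteEval_eq_sum_powerset hX, Finset.mul_sum, Finset.mul_sum]
  refine Finset.sum_congr rfl fun Y hY => ?_
  have hYX := Finset.mem_powerset.1 hY
  obtain ⟨k, hk⟩ := Nat.exists_eq_add_of_le (S.r_mono (S.mem_of_subset hX hYX) hX hYX)
  have hrank : S.rank - S.r Y = S.rank - S.r X + k := by
    have := S.r_le_rank hX
    omega
  have hsign : (-1 : ℤ) ^ S.r Y * (-1) ^ S.r Y = 1 := by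
    rw [← mul_pow]
    simp
  rw [← S.nullity_add_r hX, hrank, hk, Nat.add_sub_cancel_left, sub_sub_cancel_left,
    sub_sub_cancel_left, neg_pow a k]
  simp only [pow_add]
  linear_combination (-(a ^ (S.rank - (S.r Y + k)) * (-1) ^ S.nullity X * (-1) ^ k * a ^ k *
    (-c) ^ S.nullity Y)) * hsign

lemma pow_nullity_mul_contrTutteEval_add_one (hX : X ∈ S.C) (b d : ℤ) :
    d ^ S.nullity X * S.contrTutteEval X (b + 1) (d + 1) =
      ∑ Z ∈ S.C with X ⊆ Z, b ^ (S.rank - S.r Z) * d ^ S.nullity Z := by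
  rw [S.contrTutteEval_eq_sum_superset hX, Finset.mul_sum]
  refine Finset.sum_congr rfl fun Z hZ => ?_
  obtain ⟨hZ, hXZ⟩ := Finset.mem_filter.1 hZ
  rw [add_sub_cancel_right, add_sub_cancel_right, mul_left_comm,
    pow_mul_pow_sub d (S.nullity_mono hZ hXZ)]

/-- Kung's convolution-multiplication identity, usually written in terms of the rank generating
function `R(𝒞; x, y) = T(𝒞; x + 1, y + 1)`. -/
theorem tutteEval_mul_add_one (a b c d : ℤ) :
    S.tutteEval (a * b + 1) (c * d + 1) = ∑ X ∈ S.C, a ^ (S.rank - S.r X) * (-d) ^ S.nullity X *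
      (S.restTutteEval X (1 - a) (1 - c) * S.contrTutteEval X (b + 1) (d + 1)) := by
  let f (Y : Finset E) : ℤ := (-1) ^ S.r Y * a ^ (S.rank - S.r Y) * (-c) ^ S.nullity Y
  let g (Z : Finset E) : ℤ := b ^ (S.rank - S.r Z) * d ^ S.nullity Z
  calc S.tutteEval (a * b + 1) (c * d + 1)
      = ∑ Z ∈ S.C, g Z * ((-1) ^ Z.card * f Z) := by
        rw [tutteEval]
        refine Finset.sum_congr rfl fun Z hZ => ?_
        have hsign : (-1 : ℤ) ^ Z.card * (-1) ^ S.r Z * (-1) ^ S.nullity Z = 1 := by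
          rw [mul_assoc, ← pow_add, add_comm (S.r Z), S.nullity_add_r hZ, ← mul_pow]
          simp
        rw [← nullity]
        simp only [f, g, add_sub_cancel_right, mul_pow, neg_pow c]
        linear_combination (-(a ^ (S.rank - S.r Z) * b ^ (S.rank - S.r Z) *
          c ^ S.nullity Z * d ^ S.nullity Z)) * hsign
    _ = ∑ Z ∈ S.C, ∑ X ∈ Z.powerset, g Z * ((-1) ^ X.card * ∑ Y ∈ X.powerset, f Y) := by
        simp only [← sum_powerset_neg_one_pow_card_mul_sum_powerset, Finset.mul_sum]
    _ = ∑ X ∈ S.C, ∑ Z ∈ S.C with X ⊆ Z, g Z * ((-1) ^ X.card * ∑ Y ∈ X.powerset, f Y) := by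
        refine Finset.sum_comm' fun Z X => ?_
        simp only [Finset.mem_powerset, Finset.mem_filter]
        exact ⟨fun h => ⟨h, S.mem_of_subset h.1 h.2⟩, fun h => h.1⟩
    _ = ∑ X ∈ S.C, a ^ (S.rank - S.r X) * (-d) ^ S.nullity X *
          (S.restTutteEval X (1 - a) (1 - c) * S.contrTutteEval X (b + 1) (d + 1)) := by
        refine Finset.sum_congr rfl fun X hX => ?_
        rw [← Finset.sum_mul, ← S.pow_nullity_mul_contrTutteEval_add_one hX,
          ← S.pow_mul_restTutteEval_one_sub hX, neg_pow d]
        ring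

lemma tutteEval_eq_sum_restTutteEval_mul_contrTutteEval (t s : ℤ) :
    S.tutteEval t s = ∑ X ∈ S.C, S.restTutteEval X 0 s * S.contrTutteEval X t 0 := by
  simpa using S.tutteEval_mul_add_one 1 (t - 1) (1 - s) (-1)

end Convolution

section LoopsInContractions

lemma contrTutteEval_zero_right_of_mem_cl (he : e ∈ S.cl X) (heX : e ∉ X) (t : ℤ) :
    S.contrTutteEval X t 0 = 0 := by
  rw [contrTutteEval, contrCentrals, Finset.sum_filter]
  refine sum_powerset_eq_zero_of_add_insert_eq_zero (by simpa using heX) fun Y _ heY => ?_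
  by_cases hYX : Y ∪ X ∈ S.C
  · obtain ⟨hins, hr⟩ := S.mem_cl.1 (S.cl_mono hYX Finset.subset_union_right he)
    have hrank : S.r (Y ∪ X) - S.r X ≤ Y.card := by
      have hle := S.r_le_r_add_card_sdiff hYX Finset.subset_union_right
      have hcard : ((Y ∪ X) \ X).card ≤ Y.card := Finset.card_le_card (by grind)
      omega
    rw [Finset.insert_union, if_pos hYX, if_pos hins, hr, Finset.card_insert_of_notMem heY,
      Nat.sub_add_comm hrank, pow_succ]
    ring
  · have hins : insert e Y ∪ X ∉ S.C := fun h =>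
      hYX (S.mem_of_subset h (Finset.union_subset_union_left (Finset.subset_insert e Y)))
    rw [if_neg hYX, if_neg hins, add_zero]

lemma contrTutteEval_zero_right_of_notMem_flats (hX : X ∈ S.C) (hflat : X ∉ S.flats) (t : ℤ) :
    S.contrTutteEval X t 0 = 0 := by
  have hne : X ≠ S.cl X := fun h => hflat (Finset.mem_filter.2 ⟨hX, h.symm⟩)
  obtain ⟨e, he, heX⟩ := Finset.exists_of_ssubset ((S.subset_cl hX).ssubset_of_ne hne)
  exact S.contrTutteEval_zero_right_of_mem_cl he heX t

end LoopsInContractions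

section BridgesInRestrictions

variable {S}

lemma RestBasis.of_r_eq {B : Finset E} (hX : X ∈ S.C) (hBX : B ⊆ X) (hind : S.r B = B.card)
    (hspan : S.r B = S.r X) : S.RestBasis X B := by
  refine ⟨S.mem_of_subset hX hBX, hBX, hind, fun B' hB' hB'X hind' hBB' => ?_⟩
  have := S.r_mono hB' hX hB'X
  exact (Finset.eq_of_subset_of_card_le hBB' (by omega)).symm

lemma RestBridge.r_erase_lt (hX : X ∈ S.C) (he : S.RestBridge X e) :
    S.r (X.erase e) < S.r X := by
  have hsub := Finset.erase_subset e X
  have hX' := S.mem_of_subset hX hsub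
  refine (S.r_mono hX' hX hsub).lt_of_ne fun hr => ?_
  obtain ⟨B, hB, hind, hspan⟩ := S.exists_subset_r_eq_card hX'
  have hbasis := RestBasis.of_r_eq hX (hB.trans hsub) hind (hspan.trans hr)
  exact Finset.notMem_erase e X (hB (he.2 B hbasis))

lemma RestBridge.r_insert (hX : X ∈ S.C) (he : S.RestBridge X e) (hYX : Y ⊆ X) (heY : e ∉ Y) :
    S.r (insert e Y) = S.r Y + 1 := by
  have herase : insert e (X.erase e) = X := Finset.insert_erase he.1
  have hdim := S.r_insert_add_r_le (herase.symm ▸ hX) (Finset.subset_erase.2 ⟨hYX, heY⟩)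
  rw [herase] at hdim
  have hlt := he.r_erase_lt hX
  have hle := S.r_insert_le (S.mem_of_subset hX (Finset.insert_subset he.1 hYX))
  omega

lemma RestBridge.restTutteEval_zero_left (hX : X ∈ S.C) (he : S.RestBridge X e) (s : ℤ) :
    S.restTutteEval X 0 s = 0 := by
  rw [S.restTutteEval_eq_sum_powerset hX]
  refine sum_powerset_eq_zero_of_add_insert_eq_zero he.1 fun Y hYX heY => ?_
  have hr := he.r_insert hX hYX heY
  have hins := Finset.insert_subset he.1 hYX
  have hle := S.r_mono (S.mem_of_subset hX hins) hX hins
  have hnull : S.nullity (insert e Y) = S.nullity Y := by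
    rw [nullity, hr, Finset.card_insert_of_notMem heY, Nat.add_sub_add_right, nullity]
  have hcorank : S.r X - S.r Y = S.r X - (S.r Y + 1) + 1 := by omega
  rw [hnull, hr, hcorank, pow_succ]
  ring

end BridgesInRestrictions

lemma restTutteEval_zero_left_of_notMem_cyclicFlats (hX : X ∈ S.flats) (hcyc : X ∉ S.cyclicFlats)
    (s : ℤ) : S.restTutteEval X 0 s = 0 := by
  obtain ⟨e, he⟩ : ∃ e, S.RestBridge X e := by
    by_contra hbridge
    exact hcyc (Finset.mem_filter.2 ⟨hX, hbridge⟩)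
  exact he.restTutteEval_zero_left (Finset.mem_filter.1 hX).1 s

end Semimatroid

/-- `T(𝒞;t,s) = Σ_{X ∈ ℒ(𝒞)} T(𝒞|X;0,s) T(𝒞/X;t,0)`, and moreover the
sum may be restricted to the cyclic flats of `𝒞`. -/
theorem Semimatroid.tutte_convolution_flats
    {E : Type*} [DecidableEq E] [Fintype E] (S : Semimatroid E) :
    ∀ t s : ℤ,
      (S.tutteEval t s =
        ∑ X ∈ S.flats, S.restTutteEval X 0 s * S.contrTutteEval X t 0) ∧
      (S.tutteEval t s =
        ∑ X ∈ S.cyclicFlats, S.restTutteEval X 0 s * S.contrTutteEval X t 0) := by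
  intro t s
  have hflats : S.tutteEval t s =
      ∑ X ∈ S.flats, S.restTutteEval X 0 s * S.contrTutteEval X t 0 := by
    rw [S.tutteEval_eq_sum_restTutteEval_mul_contrTutteEval]
    refine (Finset.sum_subset (Finset.filter_subset _ _) fun X hX hflat => ?_).symm
    rw [S.contrTutteEval_zero_right_of_notMem_flats hX hflat, mul_zero]
  refine ⟨hflats, hflats.trans ?_⟩
  refine (Finset.sum_subset (Finset.filter_subset _ _) fun X hX hcyc => ?_).symm
  rw [S.restTutteEval_zero_left_of_notMem_cyclicFlats hX hcyc, zero_mul]
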